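/- Let Φ be a real-valued function that is C³ (three times continuously differentiable) on an open subset of the d×d real symmetric matrices containing v⁻¹W, where v > 0 and W is a d×d real symmetric matrix. Let u, p, q ∈ ℝ and let R be a d×d real symmetric matrix, and set ξ = v⁻¹(R − q·v⁻¹·W). Then the third derivative at t = 0 of the function t ↦ (u + t·p) − (v + t·q)·Φ((v + t·q)⁻¹·(W + t·R)) equals −v·Φ₃ + 3q·Φ₂, where Φ₂ and Φ₃ denote respectively the second and third derivatives at s = 0 of the function s ↦ Φ(v⁻¹W + s·ξ). -/

import Mathlib

open Matrix

attribute [local instance] Matrix.frobeniusNormedAddCommGroup Matrix.frobeniusNormedSpace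

/-- The space `𝕊ᵈ` of `d × d` real symmetric matrices, as the submodule of self-adjoint
matrices (over `ℝ`, self-adjoint means symmetric). -/
noncomputable abbrev SymMat (d : ℕ) : Submodule ℝ (Matrix (Fin d) (Fin d) ℝ) :=
  selfAdjoint.submodule ℝ (Matrix (Fin d) (Fin d) ℝ)

/-!
For a Möbius map `σ t = (a * t + b) / (c * t + d)` of determinant `δ = a * d - b * c`, the second
derivative of `(c * t + d) • g (σ t)` is `(δ ^ 2 / (c * t + d) ^ 3) • D²g (σ t)`: the weight
`c * t + d` is exactly the one that cancels the first-order terms (Bol's lemma). One more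
differentiation produces only `D³g` and `D²g`. The argument of `Φ` moves along the line
`s ↦ v⁻¹ • W + s • ξ` with Möbius parameter `s = v * t / (q * t + v)`, of determinant `v ^ 2`, so
the perspective of `Φ` has this form.
-/

open Filter Topology
open scoped ContDiff

section Bol

variable {𝕜 F : Type*} [NontriviallyNormedField 𝕜] [NormedAddCommGroup F] [NormedSpace 𝕜 F]

theorem iteratedDeriv_const_add_smul_const {n : ℕ} (hn : 2 ≤ n) (u p : F) (t : 𝕜) :
    iteratedDeriv n (fun t : 𝕜 => u + t • p) t = 0 := by
  obtain ⟨m, rfl⟩ := Nat.exists_eq_add_of_le' hn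
  have hderiv : deriv (fun t : 𝕜 => u + t • p) = fun _ => p := by
    funext t
    simpa using (((hasDerivAt_id t).smul_const p).const_add u).deriv
  rw [iteratedDeriv_succ', hderiv, iteratedDeriv_const, if_neg m.succ_ne_zero]

theorem hasDerivAt_iteratedDeriv {n : ℕ∞ω} {k : ℕ} {g : 𝕜 → F} {t : 𝕜} (hg : ContDiffAt 𝕜 n g t)
    (hk : k < n) : HasDerivAt (iteratedDeriv k g) (iteratedDeriv (k + 1) g t) t := by
  rw [iteratedDeriv_succ, hasDerivAt_deriv_iff, iteratedDeriv_eq_equiv_comp]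
  exact (LinearIsometryEquiv.differentiable _).differentiableAt.comp t
    (hg.differentiableAt_iteratedFDeriv hk)

theorem hasDerivAt_const_mul_add_const (c d t : 𝕜) : HasDerivAt (fun t => c * t + d) c t := by
  simpa using ((hasDerivAt_id t).const_mul c).add_const d

variable {a b c d t : 𝕜} {g : 𝕜 → F}

theorem hasDerivAt_mobius (ht : c * t + d ≠ 0) :
    HasDerivAt (fun t => (a * t + b) / (c * t + d)) ((a * d - b * c) / (c * t + d) ^ 2) t :=
  ((hasDerivAt_const_mul_add_const a b t).fun_div
    (hasDerivAt_const_mul_add_const c d t) ht).congr_deriv (by ring)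

theorem hasDerivAt_iteratedDeriv_comp_mobius {n : ℕ∞ω} {k : ℕ} (ht : c * t + d ≠ 0)
    (hg : ContDiffAt 𝕜 n g ((a * t + b) / (c * t + d))) (hk : k < n) :
    HasDerivAt (fun t => iteratedDeriv k g ((a * t + b) / (c * t + d)))
      (((a * d - b * c) / (c * t + d) ^ 2) •
        iteratedDeriv (k + 1) g ((a * t + b) / (c * t + d))) t :=
  HasDerivAt.scomp (h := fun t => (a * t + b) / (c * t + d)) t (hasDerivAt_iteratedDeriv hg hk)
    (hasDerivAt_mobius ht)

theorem contDiffAt_smul_comp_mobius {n : ℕ∞ω} (ht : c * t + d ≠ 0)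
    (hg : ContDiffAt 𝕜 n g ((a * t + b) / (c * t + d))) :
    ContDiffAt 𝕜 n (fun t => (c * t + d) • g ((a * t + b) / (c * t + d))) t := by
  have hweight : ContDiffAt 𝕜 n (fun t => c * t + d) t := by fun_prop
  have hmobius : ContDiffAt 𝕜 n (fun t => (a * t + b) / (c * t + d)) t :=
    ContDiffAt.div (by fun_prop) hweight ht
  exact hweight.smul (hg.comp t hmobius)

theorem eventually_ne_zero_and_contDiffAt_mobius {n : ℕ∞ω} (hn : n ≠ ∞) (ht : c * t + d ≠ 0)
    (hg : ContDiffAt 𝕜 n g ((a * t + b) / (c * t + d))) :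
    ∀ᶠ s in 𝓝 t, c * s + d ≠ 0 ∧ ContDiffAt 𝕜 n g ((a * s + b) / (c * s + d)) :=
  ((hasDerivAt_const_mul_add_const c d t).continuousAt.eventually_ne ht).and
    ((hasDerivAt_mobius ht).continuousAt.eventually (hg.eventually hn))

theorem deriv_smul_comp_mobius (ht : c * t + d ≠ 0)
    (hg : DifferentiableAt 𝕜 g ((a * t + b) / (c * t + d))) :
    deriv (fun t => (c * t + d) • g ((a * t + b) / (c * t + d))) t =
      c • g ((a * t + b) / (c * t + d)) +
        ((a * d - b * c) / (c * t + d)) • deriv g ((a * t + b) / (c * t + d)) := by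
  have hprod := (hasDerivAt_const_mul_add_const c d t).fun_smul
    (hg.hasDerivAt.scomp t (hasDerivAt_mobius ht))
  refine hprod.deriv.trans ?_
  simp only [Function.comp_apply]
  match_scalars <;> field_simp

theorem iteratedDeriv_two_smul_comp_mobius (ht : c * t + d ≠ 0)
    (hg : ContDiffAt 𝕜 2 g ((a * t + b) / (c * t + d))) :
    iteratedDeriv 2 (fun t => (c * t + d) • g ((a * t + b) / (c * t + d))) t =
      ((a * d - b * c) ^ 2 / (c * t + d) ^ 3) •
        iteratedDeriv 2 g ((a * t + b) / (c * t + d)) := by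
  have hderiv : deriv (fun t => (c * t + d) • g ((a * t + b) / (c * t + d))) =ᶠ[𝓝 t]
      fun t => c • iteratedDeriv 0 g ((a * t + b) / (c * t + d)) +
        ((a * d - b * c) / (c * t + d)) • iteratedDeriv 1 g ((a * t + b) / (c * t + d)) := by
    filter_upwards [eventually_ne_zero_and_contDiffAt_mobius (by decide) ht hg] with s hs
    simpa only [iteratedDeriv_zero, iteratedDeriv_one] using
      deriv_smul_comp_mobius hs.1 (hs.2.differentiableAt two_ne_zero)
  have hcoeff := (hasDerivAt_const t (a * d - b * c)).fun_div
    (hasDerivAt_const_mul_add_const c d t) ht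
  have hfirst :=
    (hasDerivAt_iteratedDeriv_comp_mobius ht hg (k := 0) (by norm_num)).fun_const_smul c
  have hsecond :=
    hcoeff.fun_smul (hasDerivAt_iteratedDeriv_comp_mobius ht hg (k := 1) (by norm_num))
  rw [iteratedDeriv_succ, iteratedDeriv_one, hderiv.deriv_eq, (hfirst.fun_add hsecond).deriv]
  match_scalars <;> field_simp
  ring

theorem iteratedDeriv_three_smul_comp_mobius (ht : c * t + d ≠ 0)
    (hg : ContDiffAt 𝕜 3 g ((a * t + b) / (c * t + d))) :
    iteratedDeriv 3 (fun t => (c * t + d) • g ((a * t + b) / (c * t + d))) t =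
      ((a * d - b * c) ^ 3 / (c * t + d) ^ 5) •
          iteratedDeriv 3 g ((a * t + b) / (c * t + d)) -
        (3 * c * (a * d - b * c) ^ 2 / (c * t + d) ^ 4) •
          iteratedDeriv 2 g ((a * t + b) / (c * t + d)) := by
  have hbol : iteratedDeriv 2 (fun t => (c * t + d) • g ((a * t + b) / (c * t + d))) =ᶠ[𝓝 t]
      fun t => ((a * d - b * c) ^ 2 / (c * t + d) ^ 3) •
        iteratedDeriv 2 g ((a * t + b) / (c * t + d)) := by
    filter_upwards [eventually_ne_zero_and_contDiffAt_mobius (by decide) ht hg] with s hs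
    exact iteratedDeriv_two_smul_comp_mobius hs.1 (hs.2.of_le (by norm_num))
  have hcoeff := (hasDerivAt_const t ((a * d - b * c) ^ 2)).fun_div
    ((hasDerivAt_const_mul_add_const c d t).fun_pow 3) (pow_ne_zero 3 ht)
  have hprod := hcoeff.fun_smul (hasDerivAt_iteratedDeriv_comp_mobius ht hg (k := 2) (by norm_num))
  rw [iteratedDeriv_succ, hbol.deriv_eq, hprod.deriv]
  match_scalars <;> field_simp
  ring

theorem iteratedDeriv_three_affine_sub_smul_comp_mobius {v : 𝕜} (hv : v ≠ 0)
    (hg : ContDiffAt 𝕜 3 g 0) (u p : F) (q : 𝕜) :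
    iteratedDeriv 3 (fun t => (u + t • p) - (q * t + v) • g (v * t / (q * t + v))) 0 =
      -v • iteratedDeriv 3 g 0 + (3 * q) • iteratedDeriv 2 g 0 := by
  have hv₀ : q * 0 + v ≠ 0 := by simpa only [mul_zero, zero_add] using hv
  have hg₀ : ContDiffAt 𝕜 3 g ((v * 0 + 0) / (q * 0 + v)) := by
    simpa only [mul_zero, zero_add, zero_div] using hg
  have hsub := iteratedDeriv_sub (f := fun t : 𝕜 => u + t • p) (by fun_prop)
    (contDiffAt_smul_comp_mobius hv₀ hg₀)
  rw [iteratedDeriv_const_add_smul_const (by norm_num),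
    iteratedDeriv_three_smul_comp_mobius hv₀ hg₀] at hsub
  simp only [Pi.sub_def, mul_zero, zero_mul, add_zero, zero_add, zero_div, sub_zero] at hsub
  rw [hsub]
  match_scalars <;> field_simp

end Bol

theorem perspective_arg_eq_line {𝕜 E : Type*} [Field 𝕜] [AddCommGroup E] [Module 𝕜 E] {v q t : 𝕜}
    (hv : v ≠ 0) (ht : q * t + v ≠ 0) (W R : E) :
    (v + t * q)⁻¹ • (W + t • R) =
      v⁻¹ • W + (v * t / (q * t + v)) • v⁻¹ • (R - (q * v⁻¹) • W) := by
  rw [show v + t * q = q * t + v by ring]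
  match_scalars <;> field_simp
  ring

theorem third_deriv_of_perspective_composition_general {𝕜 E F : Type*}
    [NontriviallyNormedField 𝕜] [NormedAddCommGroup E] [NormedSpace 𝕜 E]
    [NormedAddCommGroup F] [NormedSpace 𝕜 F] {Φ : E → F} {v : 𝕜} (hv : v ≠ 0) {W : E}
    (hΦ : ContDiffAt 𝕜 3 Φ (v⁻¹ • W)) (u p : F) (q : 𝕜) (R : E) :
    let ξ : E := v⁻¹ • (R - (q * v⁻¹) • W)
    iteratedDeriv 3
        (fun t : 𝕜 => (u + t • p) - (v + t * q) • Φ ((v + t * q)⁻¹ • (W + t • R))) 0 =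
      -v • iteratedDeriv 3 (fun s : 𝕜 => Φ (v⁻¹ • W + s • ξ)) 0 +
        (3 * q) • iteratedDeriv 2 (fun s : 𝕜 => Φ (v⁻¹ • W + s • ξ)) 0 := by
  intro ξ
  have hline : ContDiffAt 𝕜 3 (fun s : 𝕜 => Φ (v⁻¹ • W + s • ξ)) 0 :=
    ContDiffAt.comp (0 : 𝕜) (by simpa only [zero_smul, add_zero] using hΦ) (by fun_prop)
  rw [← iteratedDeriv_three_affine_sub_smul_comp_mobius hv hline u p q]
  apply EventuallyEq.iteratedDeriv_eq
  have hv₀ : q * 0 + v ≠ 0 := by simpa only [mul_zero, zero_add] using hv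
  have hweight : ∀ᶠ t in 𝓝 (0 : 𝕜), q * t + v ≠ 0 :=
    (hasDerivAt_const_mul_add_const q v 0).continuousAt.eventually_ne hv₀
  filter_upwards [hweight] with t ht
  rw [perspective_arg_eq_line hv ht, mul_comm t q, add_comm v]

/-- If `Φ` is `C³` on an open subset of `𝕊ᵈ` containing `v⁻¹ W`, then the third derivative
at `t = 0` of `t ↦ (u + t p) - (v + t q) Φ((v + t q)⁻¹ (W + t R))` equals `-v Φ₃ + 3 q Φ₂`,
where `Φ₂`, `Φ₃` are the second and third derivatives at `s = 0` of `s ↦ Φ(v⁻¹ W + s ξ)`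
and `ξ = v⁻¹ (R - q v⁻¹ W)`. -/
theorem third_deriv_of_perspective_composition {d : ℕ} (Φ : SymMat d → ℝ)
    (U : Set (SymMat d)) (hU : IsOpen U) (hΦ : ContDiffOn ℝ 3 Φ U)
    (v : ℝ) (hv : 0 < v) (W : SymMat d) (hWU : v⁻¹ • W ∈ U)
    (u p q : ℝ) (R : SymMat d) :
    let ξ : SymMat d := v⁻¹ • (R - (q * v⁻¹) • W)
    iteratedDeriv 3 (fun t : ℝ => (u + t * p) - (v + t * q) * Φ ((v + t * q)⁻¹ • (W + t • R))) 0
      = -v * iteratedDeriv 3 (fun s : ℝ => Φ (v⁻¹ • W + s • ξ)) 0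
        + 3 * q * iteratedDeriv 2 (fun s : ℝ => Φ (v⁻¹ • W + s • ξ)) 0 := by
  simpa only [smul_eq_mul] using third_deriv_of_perspective_composition_general hv.ne'
    (hΦ.contDiffAt (hU.mem_nhds hWU)) u p q R
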